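/- arXiv:2007.12653 — 7 statements merged into one kernel-verified Lean document; each statement's English description precedes it below -/
import Mathlib

section
/- Let m ≥ 1 be an integer and let λ be a real number with λ > m. For every integer n with n ≥ λ, the binomial upper tail with mean λ is nonincreasing in the number of trials: P(X_{n+1} ≥ m) ≤ P(X_n ≥ m), where X_n is a Binomial(n, λ/n) random variable and X_{n+1} is a Binomial(n+1, λ/(n+1)) random variable. Equivalently, ∑_{j=m}^{n+1} (n+1 choose j) (λ/(n+1))^j (1-λ/(n+1))^{n+1-j} ≤ ∑_{j=m}^{n} (n choose j) (λ/n)^j (1-λ/n)^{n-j}. -/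
/-- Lower tail: probability that a Binomial(n,a) variable is at most k. -/
noncomputable def lowTail (n k : ℕ) (a : ℝ) : ℝ :=
  ∑ j ∈ Finset.range (k + 1), (n.choose j : ℝ) * a ^ j * (1 - a) ^ (n - j)

lemma lowTail_succ (n k : ℕ) (a : ℝ) :
    lowTail n (k + 1) a =
      lowTail n k a + (n.choose (k + 1) : ℝ) * a ^ (k + 1) * (1 - a) ^ (n - (k + 1)) := by
  unfold lowTail
  rw [Finset.sum_range_succ]

lemma upper_eq (n k : ℕ) (hk : k ≤ n) (a : ℝ) :
    ∑ j ∈ Finset.Icc (k + 1) n, (n.choose j : ℝ) * a ^ j * (1 - a) ^ (n - j) =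
      1 - lowTail n k a := by
  have h1 : ∑ j ∈ Finset.range (n + 1), (n.choose j : ℝ) * a ^ j * (1 - a) ^ (n - j) = 1 := by
    have h := add_pow a (1 - a) n
    rw [add_sub_cancel, one_pow] at h
    refine Eq.trans (Finset.sum_congr rfl fun j _ => ?_) h.symm
    ring
  have h2 := Finset.sum_range_add_sum_Ico
    (fun j => (n.choose j : ℝ) * a ^ j * (1 - a) ^ (n - j)) (Nat.succ_le_succ hk)
  have h3 : Finset.Icc (k + 1) n = Finset.Ico (k + 1) (n + 1) := by
    ext j; simp only [Finset.mem_Icc, Finset.mem_Ico]; omega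
  rw [h3]
  unfold lowTail
  simp only [Nat.succ_eq_add_one] at h2
  linarith

lemma lowTail_trial (n k : ℕ) (hk : k < n) (a : ℝ) :
    lowTail (n + 1) k a = lowTail n k a - a * ((n.choose k : ℝ) * a ^ k * (1 - a) ^ (n - k)) := by
  induction k with
  | zero =>
    simp only [lowTail, zero_add, Finset.sum_range_one, Nat.choose_zero_right, Nat.sub_zero]
    push_cast
    ring
  | succ k ih =>
    rw [lowTail_succ, lowTail_succ, ih (by omega)]
    obtain ⟨d, rfl⟩ : ∃ d, n = k + 1 + 1 + d := ⟨n - (k + 1 + 1), by omega⟩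
    rw [Nat.choose_succ_succ (k + 1 + 1 + d) k]
    have e1 : k + 1 + 1 + d + 1 - (k + 1) = d + 2 := by omega
    have e2 : k + 1 + 1 + d - (k + 1) = d + 1 := by omega
    have e3 : k + 1 + 1 + d - k = d + 2 := by omega
    rw [e1, e2, e3]
    push_cast
    simp only [Nat.succ_eq_add_one]
    ring

lemma hasDerivAt_term (c : ℝ) (k d : ℕ) (a : ℝ) :
    HasDerivAt (fun x : ℝ => c * x ^ k * (1 - x) ^ (d + 1))
      (c * (k * a ^ (k - 1)) * (1 - a) ^ (d + 1) - c * a ^ k * ((d + 1) * (1 - a) ^ d)) a := by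
  have h1 := ((hasDerivAt_pow k a).const_mul c).mul
    (((hasDerivAt_id a).const_sub 1).pow (d + 1))
  refine h1.congr_deriv ?_
  simp
  ring

lemma hasDerivAt_lowTail (k d : ℕ) (a : ℝ) :
    HasDerivAt (lowTail (k + 1 + d) k)
      (-((d + 1) * ((k + 1 + d).choose k : ℝ) * a ^ k * (1 - a) ^ d)) a := by
  induction k generalizing d with
  | zero =>
    have h := hasDerivAt_term 1 0 d a
    have hfun : lowTail (0 + 1 + d) 0 = fun x : ℝ => 1 * x ^ 0 * (1 - x) ^ (d + 1) := by
      funext x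
      simp [lowTail, add_comm]
    rw [hfun]
    refine h.congr_deriv ?_
    simp
  | succ k ih =>
    have h1 := (ih (d + 1)).add (hasDerivAt_term ((k + 1 + (d + 1)).choose (k + 1)) (k + 1) d a)
    have e : k + 1 + 1 + d = k + 1 + (d + 1) := by ring
    have e2 : k + 1 + (d + 1) - (k + 1) = d + 1 := by omega
    rw [e]
    have hfun : lowTail (k + 1 + (d + 1)) (k + 1) = lowTail (k + 1 + (d + 1)) k +
        fun x : ℝ => ((k + 1 + (d + 1)).choose (k + 1) : ℝ) * x ^ (k + 1) * (1 - x) ^ (d + 1) := by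
      funext x
      rw [lowTail_succ, e2]
      rfl
    rw [hfun]
    refine h1.congr_deriv ?_
    · have hc := Nat.choose_succ_right_eq (k + 1 + (d + 1)) k
      have e3 : k + 1 + (d + 1) - k = d + 2 := by omega
      rw [e3] at hc
      have hc' : ((k + 1 + (d + 1)).choose (k + 1) : ℝ) * (k + 1) =
        ((k + 1 + (d + 1)).choose k : ℝ) * (d + 2) := by exact_mod_cast hc
      simp only [Nat.add_sub_cancel]
      push_cast
      linear_combination (a ^ k * (1 - a) ^ (d + 1)) * hc'

lemma key_antitone (k d : ℕ) (lam : ℝ) (hlam : (k : ℝ) + 1 < lam)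
    (hn : lam ≤ (k : ℝ) + 1 + d) :
    lowTail (k + 1 + d) k (lam / (k + 1 + d)) ≤
      lowTail (k + 1 + d + 1) k (lam / (k + 1 + d + 1)) := by
  have hk0 : (0 : ℝ) ≤ k := Nat.cast_nonneg k
  have hd0 : (0 : ℝ) ≤ d := Nat.cast_nonneg d
  have hN : (0 : ℝ) < (k : ℝ) + 1 + d := by positivity
  set C : ℝ := ((k + 1 + d).choose k : ℝ) with hC
  have hC0 : 0 ≤ C := Nat.cast_nonneg _
  let f : ℝ → ℝ := fun x => lowTail (k + 1 + d) k x -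
    (lam - ((k : ℝ) + 1 + d) * x) * (C * x ^ k * (1 - x) ^ (d + 1))
  let f' : ℝ → ℝ := fun a => -((d + 1) * C * a ^ k * (1 - a) ^ d) -
    ((-((k : ℝ) + 1 + d)) * (C * a ^ k * (1 - a) ^ (d + 1)) +
      (lam - ((k : ℝ) + 1 + d) * a) * (C * (k * a ^ (k - 1)) * (1 - a) ^ (d + 1)
        - C * a ^ k * ((d + 1) * (1 - a) ^ d)))
  have hf : ∀ a, HasDerivAt f (f' a) a := by
    intro a
    have hl : HasDerivAt (fun x : ℝ => lam - ((k : ℝ) + 1 + d) * x) (-((k : ℝ) + 1 + d)) a := by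
      have := ((hasDerivAt_id a).const_mul ((k : ℝ) + 1 + d)).const_sub lam
      simpa using this
    exact (hasDerivAt_lowTail k d a).sub (hl.mul (hasDerivAt_term C k d a))
  set u := lam / ((k : ℝ) + 1 + d + 1) with hu
  set v := lam / ((k : ℝ) + 1 + d) with hv
  have huv : u ≤ v := div_le_div_of_nonneg_left (by linarith) hN (by linarith)
  have hu' : u * ((k : ℝ) + 1 + d + 1) = lam := div_mul_cancel₀ _ (by positivity)
  have hv' : v * ((k : ℝ) + 1 + d) = lam := div_mul_cancel₀ _ (by positivity)
  have hu0 : 0 < u := div_pos (by linarith) (by positivity)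
  have hv1 : v ≤ 1 := (div_le_one hN).2 hn
  have hanti : AntitoneOn f (Set.Icc u v) := by
    apply antitoneOn_of_hasDerivWithinAt_nonpos (convex_Icc u v) (f' := f')
    · exact fun x _ => (hf x).continuousAt.continuousWithinAt
    · exact fun x _ => (hf x).hasDerivWithinAt
    · intro a ha
      rw [interior_Icc] at ha
      obtain ⟨h1, h2⟩ := ha
      have ha0 : 0 < a := hu0.trans h1
      have hpk : (k : ℝ) * a ^ (k - 1) * a = k * a ^ k := by
        cases k with
        | zero => simp
        | succ k => simp only [Nat.add_sub_cancel]; ring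
      have hid : f' a * a = -((C * a ^ k * (1 - a) ^ d) *
          ((a - (lam - ((k : ℝ) + 1 + d) * a)) * (((k : ℝ) + 1 + d) * a - k))) := by
        simp only [f']
        linear_combination (-(lam - ((k : ℝ) + 1 + d) * a) * C * (1 - a) ^ (d + 1)) * hpk
      have hb : 0 ≤ a - (lam - ((k : ℝ) + 1 + d) * a) := by nlinarith
      have hb2 : 0 ≤ ((k : ℝ) + 1 + d) * a - k := by linarith
      have h1a : 0 ≤ 1 - a := by linarith
      have : f' a * a ≤ 0 := by
        rw [hid, neg_nonpos]
        positivity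
      exact nonpos_of_mul_nonpos_left this ha0
  have h := hanti (Set.left_mem_Icc.2 huv) (Set.right_mem_Icc.2 huv) huv
  rw [lowTail_trial _ _ (by omega)]
  have e : k + 1 + d - k = d + 1 := by omega
  rw [e]
  simp only [f] at h
  have hz : lam - ((k : ℝ) + 1 + d) * v = 0 := by linarith
  have hz2 : lam - ((k : ℝ) + 1 + d) * u = u := by linarith
  rw [hz, hz2, zero_mul, sub_zero] at h
  exact h


/-- For an integer `m ≥ 1`, a real `λ > m`, and an integer `n ≥ λ`,
the Binomial upper tail with fixed mean `λ` is nonincreasing in the number of trials: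
`P(X_{n+1} ≥ m) ≤ P(X_n ≥ m)` where `X_n ~ Binomial(n, λ/n)` and
`X_{n+1} ~ Binomial(n+1, λ/(n+1))`. -/
theorem binomial_tail_antitone_in_trials (m : ℕ) (hm : 1 ≤ m) (lam : ℝ)
    (hlam : (m : ℝ) < lam) (n : ℕ) (hn : lam ≤ (n : ℝ)) :
    ∑ j ∈ Finset.Icc m (n + 1),
        ((n + 1).choose j : ℝ) * (lam / (n + 1)) ^ j * (1 - lam / (n + 1)) ^ (n + 1 - j) ≤
      ∑ j ∈ Finset.Icc m n, (n.choose j : ℝ) * (lam / n) ^ j * (1 - lam / n) ^ (n - j) := by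
  obtain ⟨k, rfl⟩ : ∃ k, m = k + 1 := ⟨m - 1, by omega⟩
  have hkn : k + 1 < n := by
    by_contra hcon
    have hcon' : (n : ℝ) ≤ ((k + 1 : ℕ) : ℝ) := by exact_mod_cast not_lt.1 hcon
    linarith
  obtain ⟨d, rfl⟩ : ∃ d, n = k + 1 + d := ⟨n - (k + 1), by omega⟩
  rw [upper_eq _ _ (by omega), upper_eq _ _ (by omega)]
  push_cast at hlam hn ⊢
  have := key_antitone k d lam hlam hn
  linarith
end

section
/- Let m ≥ 1 be an integer and λ a real number with λ > m. For every integer n ≥ λ, the Binomial(n, λ/n) upper tail at m is at least the Poisson(λ) upper tail at m: ∑_{j=m}^{n} (n choose j) (λ/n)^j (1-λ/n)^{n-j} ≥ 1 − ∑_{j=0}^{m-1} e^{-λ} λ^j / j!. -/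
/-- Binomial point probability. -/
noncomputable def bp (n j : ℕ) (p : ℝ) : ℝ := (n.choose j : ℝ) * p ^ j * (1 - p) ^ (n - j)

lemma bp_eval (n j : ℕ) (p : ℝ) : bp n j p = (bernsteinPolynomial ℝ n j).eval p := by
  simp [bp, bernsteinPolynomial]

lemma bp_rec_zero (n : ℕ) (p : ℝ) : bp (n + 1) 0 p = (1 - p) * bp n 0 p := by
  simp [bp, pow_succ, mul_comm]

lemma bp_rec_succ (n j : ℕ) (p : ℝ) :
    bp (n + 1) (j + 1) p = p * bp n j p + (1 - p) * bp n (j + 1) p := by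
  unfold bp
  rw [Nat.choose_succ_succ, Nat.add_sub_add_right]
  push_cast
  rcases lt_or_ge j n with h | h
  · obtain ⟨d, rfl⟩ := Nat.exists_eq_add_of_lt h
    have h1 : j + d + 1 - j = d + 1 := by omega
    have h2 : j + d + 1 - (j + 1) = d := by omega
    rw [h1, h2]
    ring
  · rw [Nat.choose_eq_zero_of_lt (show n < j + 1 by omega)]
    push_cast
    ring

lemma bp_deriv_zero (n : ℕ) (p : ℝ) :
    HasDerivAt (bp (n + 1) 0) (-((n + 1 : ℝ) * bp n 0 p)) p := by
  have h := (bernsteinPolynomial ℝ (n + 1) 0).hasDerivAt p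
  rw [bernsteinPolynomial.derivative_zero] at h
  have e : bp (n + 1) 0 = fun x => (bernsteinPolynomial ℝ (n + 1) 0).eval x :=
    funext fun x => bp_eval _ _ _
  rw [e, bp_eval]
  refine h.congr_deriv ?_
  simp
  try ring

lemma bp_deriv_succ (n j : ℕ) (p : ℝ) :
    HasDerivAt (bp (n + 1) (j + 1)) ((n + 1 : ℝ) * (bp n j p - bp n (j + 1) p)) p := by
  have h := (bernsteinPolynomial ℝ (n + 1) (j + 1)).hasDerivAt p
  rw [bernsteinPolynomial.derivative_succ] at h
  have e : bp (n + 1) (j + 1) = fun x => (bernsteinPolynomial ℝ (n + 1) (j + 1)).eval x :=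
    funext fun x => bp_eval _ _ _
  rw [e, bp_eval, bp_eval]
  refine h.congr_deriv ?_
  simp

/-- Binomial distribution function at `k`. -/
noncomputable def bcdf (n k : ℕ) (p : ℝ) : ℝ := ∑ j ∈ Finset.range (k + 1), bp n j p

lemma bcdf_succ (n k : ℕ) (p : ℝ) : bcdf n (k + 1) p = bcdf n k p + bp n (k + 1) p :=
  Finset.sum_range_succ _ _

lemma bcdf_zero (n : ℕ) (p : ℝ) : bcdf n 0 p = bp n 0 p := by simp [bcdf]

lemma bcdf_rec (n k : ℕ) (p : ℝ) : bcdf (n + 1) k p = bcdf n k p - p * bp n k p := by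
  induction k with
  | zero => rw [bcdf_zero, bcdf_zero, bp_rec_zero]; ring
  | succ k ih => rw [bcdf_succ, bcdf_succ, ih, bp_rec_succ]; ring

lemma bcdf_deriv (n k : ℕ) (p : ℝ) :
    HasDerivAt (bcdf (n + 1) k) (-((n + 1 : ℝ) * bp n k p)) p := by
  induction k with
  | zero =>
    have e : bcdf (n + 1) 0 = bp (n + 1) 0 := funext fun x => bcdf_zero _ _
    rw [e]; exact bp_deriv_zero n p
  | succ k ih =>
    have e : bcdf (n + 1) (k + 1) = fun x => bcdf (n + 1) k x + bp (n + 1) (k + 1) x :=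
      funext fun x => bcdf_succ _ _ _
    rw [e]
    refine (ih.add (bp_deriv_succ n k p)).congr_deriv ?_
    ring

lemma bp_mono (n j : ℕ) (p : ℝ) (hp0 : 0 ≤ p) (hp1 : p ≤ 1) (hj : j < n)
    (h : (j + 1 : ℝ) ≤ (n + 1) * p) : bp n j p ≤ bp n (j + 1) p := by
  obtain ⟨d, rfl⟩ := Nat.exists_eq_add_of_lt hj
  have h1 : j + d + 1 - j = d + 1 := by omega
  have h2 : j + d + 1 - (j + 1) = d := by omega
  have hc := Nat.choose_succ_right_eq (j + d + 1) j
  unfold bp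
  rw [h1] at hc
  rw [h1, h2]
  have hc' : ((j + d + 1).choose (j + 1) : ℝ) * (j + 1) = (j + d + 1).choose j * (d + 1) := by
    exact_mod_cast hc
  push_cast at h
  have hpos : (0 : ℝ) < j + 1 := by positivity
  have key : ((j + d + 1).choose j : ℝ) * (1 - p) ≤ (j + d + 1).choose (j + 1) * p := by
    have hC : (0 : ℝ) ≤ (j + d + 1).choose j := by positivity
    refine le_of_mul_le_mul_right ?_ hpos
    calc ((j + d + 1).choose j : ℝ) * (1 - p) * (j + 1)
        = (j + d + 1).choose j * ((1 - p) * (j + 1)) := by ring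
      _ ≤ (j + d + 1).choose j * ((d + 1) * p) := by
          apply mul_le_mul_of_nonneg_left _ hC
          nlinarith
      _ = ((j + d + 1).choose (j + 1) * (j + 1)) * p := by rw [hc']; ring
      _ = _ := by ring
  have hq : 0 ≤ p ^ j * (1 - p) ^ d := mul_nonneg (pow_nonneg hp0 _) (pow_nonneg (by linarith) _)
  have := mul_le_mul_of_nonneg_right key hq
  calc _ = _ := by rw [pow_succ]; ring
    _ ≤ _ := this
    _ = _ := by ring

lemma bp_nonneg (n j : ℕ) (p : ℝ) (hp0 : 0 ≤ p) (hp1 : p ≤ 1) : 0 ≤ bp n j p := by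
  have : 0 ≤ 1 - p := by linarith
  unfold bp; positivity

lemma mix_deriv (n k : ℕ) (lam q : ℝ) :
    ∃ B : ℝ, (∀ (p : ℝ), p = (lam - q) / (n + 1) → 0 ≤ p → p ≤ 1 → k ≤ n →
        (k : ℝ) ≤ (n + 1) * p → 0 ≤ B) ∧
    HasDerivAt (fun q : ℝ => bcdf (n + 1) k ((lam - q) / (n + 1))
      - q * bp (n + 1) k ((lam - q) / (n + 1)))
      (((lam - q) / (n + 1) - q) * B) q := by
  have hn : (n + 1 : ℝ) ≠ 0 := by positivity
  have hp : HasDerivAt (fun q : ℝ => (lam - q) / (n + 1)) (-1 / (n + 1 : ℝ)) q := by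
    simpa using ((hasDerivAt_id q).const_sub lam).div_const (n + 1 : ℝ)
  have hG := (bcdf_deriv n k ((lam - q) / (n + 1))).comp q hp
  cases k with
  | zero =>
    refine ⟨bp n 0 ((lam - q) / (n + 1)), ?_, ?_⟩
    · rintro p rfl h0 h1 - -
      exact bp_nonneg _ _ _ h0 h1
    · have hb := (bp_deriv_zero n ((lam - q) / (n + 1))).comp q hp
      refine (hG.sub ((hasDerivAt_id q).mul hb)).congr_deriv ?_
      simp only [Function.comp, id, bp_rec_zero]
      generalize bp n 0 ((lam - q) / (n + 1)) = B
      field_simp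
      ring
  | succ j =>
    refine ⟨bp n (j + 1) ((lam - q) / (n + 1)) - bp n j ((lam - q) / (n + 1)), ?_, ?_⟩
    · rintro p rfl h0 h1 hk h
      push_cast at h
      exact sub_nonneg.2 (bp_mono _ _ _ h0 h1 (by omega) h)
    · have hb := (bp_deriv_succ n j ((lam - q) / (n + 1))).comp q hp
      refine (hG.sub ((hasDerivAt_id q).mul hb)).congr_deriv ?_
      simp only [Function.comp, id, bp_rec_succ]
      generalize bp n (j + 1) ((lam - q) / (n + 1)) = B
      generalize bp n j ((lam - q) / (n + 1)) = A
      field_simp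
      ring

lemma bcdf_step (n k : ℕ) (lam : ℝ) (hk : (k + 1 : ℝ) ≤ lam) (hn : lam ≤ n + 1) :
    bcdf (n + 1) k (lam / (n + 1)) ≤ bcdf (n + 2) k (lam / (n + 2)) := by
  have hn1 : (0 : ℝ) < n + 1 := by positivity
  have hn2 : (0 : ℝ) < n + 2 := by positivity
  have hk0 : (0 : ℝ) ≤ k := by positivity
  have hl : 0 ≤ lam / (n + 2) := div_nonneg (by linarith) hn2.le
  have hl1 : lam / (n + 2) ≤ 1 := by rw [div_le_one hn2]; linarith
  have hkn : k ≤ n := by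
    have : (k : ℝ) ≤ n := by linarith
    exact_mod_cast this
  have hmono : MonotoneOn (fun q : ℝ => bcdf (n + 1) k ((lam - q) / (n + 1))
      - q * bp (n + 1) k ((lam - q) / (n + 1))) (Set.Icc 0 (lam / (n + 2))) := by
    apply monotoneOn_of_deriv_nonneg (convex_Icc _ _)
    · intro q _
      obtain ⟨B, -, h⟩ := mix_deriv n k lam q
      exact h.continuousAt.continuousWithinAt
    · intro q _
      obtain ⟨B, -, h⟩ := mix_deriv n k lam q
      exact h.differentiableAt.differentiableWithinAt
    · intro q hq
      rw [interior_Icc] at hq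
      obtain ⟨hq0, hq1⟩ := hq
      obtain ⟨B, hB, h⟩ := mix_deriv n k lam q
      rw [h.deriv]
      rw [lt_div_iff₀ hn2] at hq1
      have hq2 : q ≤ 1 := by nlinarith
      apply mul_nonneg
      · rw [sub_nonneg, le_div_iff₀ hn1]; linarith
      · refine hB _ rfl (div_nonneg (by linarith) hn1.le) ?_ hkn ?_
        · rw [div_le_one hn1]; linarith
        · rw [mul_div_cancel₀ _ hn1.ne']; linarith
  have h := hmono (Set.left_mem_Icc.2 hl) (Set.right_mem_Icc.2 hl) hl
  have e : (lam - lam / (n + 2)) / (n + 1) = lam / (n + 2) := by field_simp; ring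
  simp only [e, sub_zero, zero_mul] at h
  rwa [← bcdf_rec] at h

lemma bcdf_le_poisson (n k : ℕ) (lam : ℝ) (hk : (k + 1 : ℝ) ≤ lam) (hn : lam ≤ n) :
    bcdf n k (lam / n) ≤
      ∑ j ∈ Finset.range (k + 1), Real.exp (-lam) * lam ^ j / j.factorial := by
  have hmono : ∀ N, n ≤ N → bcdf n k (lam / n) ≤ bcdf N k (lam / N) := by
    intro N hN
    induction N, hN using Nat.le_induction with
    | base => exact le_rfl
    | succ N hN ih =>
      refine ih.trans ?_
      have hnN : (n : ℝ) ≤ N := by exact_mod_cast hN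
      have hk0 : (0 : ℝ) ≤ k := by positivity
      have hN0 : (0 : ℝ) < N := by linarith
      obtain ⟨M, rfl⟩ : ∃ M, N = M + 1 := Nat.exists_eq_succ_of_ne_zero (by
        rintro rfl; simp at hN0)
      have := bcdf_step M k lam hk (by push_cast at hnN; linarith)
      have e : ((M + 1 + 1 : ℕ) : ℝ) = M + 2 := by push_cast; ring
      rw [e]
      push_cast
      exact this
  have hlim : Filter.Tendsto (fun N : ℕ => bcdf N k (lam / N)) Filter.atTop
      (nhds (∑ j ∈ Finset.range (k + 1), Real.exp (-lam) * lam ^ j / j.factorial)) := by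
    unfold bcdf bp
    apply tendsto_finsetSum
    intro j _
    apply ProbabilityTheory.tendsto_choose_mul_pow_of_tendsto_mul_atTop
    apply tendsto_const_nhds.congr'
    filter_upwards [Filter.eventually_gt_atTop 0] with N hN
    have : (N : ℝ) ≠ 0 := by positivity
    field_simp
  exact ge_of_tendsto hlim (Filter.eventually_atTop.2 ⟨n, hmono⟩)

/-- For an integer `m ≥ 1`, a real `λ > m`, and an integer `n ≥ λ`,
the Binomial(n, λ/n) upper tail at `m` is at least the Poisson(λ) upper tail at `m`:
`∑_{j=m}^{n} (n choose j) (λ/n)^j (1-λ/n)^{n-j} ≥ 1 − ∑_{j=0}^{m-1} e^{-λ} λ^j / j!`. -/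
theorem binomial_tail_ge_poisson_tail (m : ℕ) (hm : 1 ≤ m) (lam : ℝ)
    (hlam : (m : ℝ) < lam) (n : ℕ) (hn : lam ≤ (n : ℝ)) :
    1 - ∑ j ∈ Finset.range m, Real.exp (-lam) * lam ^ j / j.factorial ≤
      ∑ j ∈ Finset.Icc m n, (n.choose j : ℝ) * (lam / n) ^ j * (1 - lam / n) ^ (n - j) := by
  obtain ⟨k, rfl⟩ : ∃ k, m = k + 1 := ⟨m - 1, by omega⟩
  have h := bcdf_le_poisson n k lam (by push_cast at hlam; linarith) hn
  have hkn : k + 1 ≤ n + 1 := by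
    have : ((k + 1 : ℕ) : ℝ) ≤ n := by linarith
    have : k + 1 ≤ n := by exact_mod_cast this
    omega
  have htot : ∑ j ∈ Finset.range (n + 1), bp n j (lam / n) = 1 := by
    have := (add_pow (lam / n) (1 - lam / n) n).symm
    rw [add_sub_cancel, one_pow] at this
    rw [← this]
    apply Finset.sum_congr rfl
    intro j _
    unfold bp
    ring
  rw [← Finset.sum_range_add_sum_Ico _ hkn] at htot
  have e : Finset.Icc (k + 1) n = Finset.Ico (k + 1) (n + 1) := by ext; simp
  rw [e]
  unfold bcdf at h
  change _ ≤ ∑ j ∈ Finset.Ico (k + 1) (n + 1), bp n j (lam / n)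
  linarith
end

section
/- Fix natural numbers n and m and a real number t ∈ [0, n]. For p = (p_1, ..., p_n) ∈ [0,1]^n, let F_m(p) = P(x_1 + ... + x_n > m), where x_1, ..., x_n are independent Bernoulli random variables with means p_1, ..., p_n. Then there exists a vector p* ∈ [0,1]^n with ∑_{i=1}^n p*_i = t that minimizes F_m over the set {p ∈ [0,1]^n : ∑_{i=1}^n p_i = t} and in which any two coordinates p*_i, p*_j that both lie strictly in the open interval (0,1) are equal. -/
/-!
We model a family of `n` independent Bernoulli random variables with means
`p : Fin n → ℝ` by their joint (product) distribution on `Fin n → Bool`: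
the outcome `ω` has probability `∏ i, (if ω i then p i else 1 - p i)`.
-/

/-- number of successes in outcome `ω` -/
def bCount {n : ℕ} (ω : Fin n → Bool) : ℕ := ∑ i, if ω i then 1 else 0

/-- joint probability of the outcome `ω` for independent Bernoulli variables
with means `p` -/
noncomputable def bernWeight {n : ℕ} (p : Fin n → ℝ) (ω : Fin n → Bool) : ℝ :=
  ∏ i, if ω i then p i else 1 - p i

/-- probability of the event `E` under independent Bernoulli variables with means `p` -/
noncomputable def bernPr {n : ℕ} (p : Fin n → ℝ) (E : (Fin n → Bool) → Prop)
    [DecidablePred E] : ℝ :=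
  ∑ ω ∈ Finset.univ.filter E, bernWeight p ω

lemma bernPr_cont {n : ℕ} (E : (Fin n → Bool) → Prop) [DecidablePred E] :
    Continuous (fun p : Fin n → ℝ => bernPr p E) := by
  unfold bernPr bernWeight
  refine continuous_finsetSum _ fun ω _ => continuous_finsetProd _ fun i _ => ?_
  split_ifs <;> fun_prop

lemma bCount_comp {n : ℕ} (ω : Fin n → Bool) (σ : Equiv.Perm (Fin n)) :
    bCount (fun i => ω (σ i)) = bCount ω := by
  unfold bCount
  exact Equiv.sum_comp σ (fun i => if ω i then 1 else 0)

lemma bernPr_comp {n : ℕ} (m : ℕ) (p : Fin n → ℝ) (σ : Equiv.Perm (Fin n)) :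
    bernPr (fun i => p (σ i)) (fun ω => m < bCount ω) = bernPr p (fun ω => m < bCount ω) := by
  unfold bernPr
  rw [Finset.sum_filter, Finset.sum_filter]
  rw [← Equiv.sum_comp (Equiv.arrowCongr σ.symm (Equiv.refl Bool))]
  refine Finset.sum_congr rfl fun ω _ => ?_
  have h : (Equiv.arrowCongr σ.symm (Equiv.refl Bool)) ω = fun i => ω (σ i) := by
    ext i; simp [Equiv.arrowCongr]
  rw [h, bCount_comp]
  congr 1
  unfold bernWeight
  exact Equiv.prod_comp σ (fun i => if ω i then p i else 1 - p i)

/-- `p` with coordinates `i`, `j` replaced by `x`, `y`. -/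
noncomputable def upd2 {n : ℕ} (p : Fin n → ℝ) (i j : Fin n) (x y : ℝ) : Fin n → ℝ :=
  fun k => if k = i then x else if k = j then y else p k

lemma bernWeight_upd2 {n : ℕ} (p : Fin n → ℝ) (i j : Fin n) (hij : i ≠ j) (ω : Fin n → Bool) :
    ∃ a b b' c : ℝ, ∀ x y, bernWeight (upd2 p i j x y) ω = a + b * x + b' * y + c * (x * y) := by
  have key : ∀ x y, bernWeight (upd2 p i j x y) ω =
      (if ω i then x else 1 - x) * ((if ω j then y else 1 - y) *
        ∏ k ∈ (Finset.univ.erase i).erase j, if ω k then p k else 1 - p k) := by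
    intro x y
    unfold bernWeight
    rw [← Finset.mul_prod_erase _ _ (Finset.mem_univ i),
      ← Finset.mul_prod_erase (Finset.univ.erase i) _ (a := j) (by simp [hij.symm])]
    congr 1
    · simp [upd2]
    congr 1
    · simp [upd2, hij.symm]
    refine Finset.prod_congr rfl fun k hk => ?_
    simp only [Finset.mem_erase, Finset.mem_univ, and_true] at hk
    simp [upd2, hk.1, hk.2]
  generalize (∏ k ∈ (Finset.univ.erase i).erase j, if ω k then p k else 1 - p k) = R at key
  cases hi : ω i <;> cases hj : ω j <;> simp only [hi, hj] at key
  · exact ⟨R, -R, -R, R, fun x y => by rw [key]; simp; ring⟩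
  · exact ⟨0, 0, R, -R, fun x y => by rw [key]; simp; ring⟩
  · exact ⟨0, R, 0, -R, fun x y => by rw [key]; simp; ring⟩
  · exact ⟨0, 0, 0, R, fun x y => by rw [key]; simp; ring⟩

lemma bernPr_upd2 {n : ℕ} (m : ℕ) (p : Fin n → ℝ) (i j : Fin n) (hij : i ≠ j) :
    ∃ a b c : ℝ, ∀ x y, bernPr (upd2 p i j x y) (fun ω => m < bCount ω) =
      a + b * (x + y) + c * (x * y) := by
  choose a b b' c h using bernWeight_upd2 p i j hij
  have h1 : ∃ a b b' c : ℝ, ∀ x y, bernPr (upd2 p i j x y) (fun ω => m < bCount ω) =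
      a + b * x + b' * y + c * (x * y) := by
    let S := Finset.univ.filter (fun ω : Fin n → Bool => m < bCount ω)
    refine ⟨∑ ω ∈ S, a ω, ∑ ω ∈ S, b ω, ∑ ω ∈ S, b' ω, ∑ ω ∈ S, c ω, fun x y => ?_⟩
    unfold bernPr
    simp only [h, Finset.sum_add_distrib, Finset.sum_mul, S]
  obtain ⟨a, b, b', c, h1⟩ := h1
  have hs : bernPr (upd2 p i j 1 0) (fun ω => m < bCount ω) =
      bernPr (upd2 p i j 0 1) (fun ω => m < bCount ω) := by
    rw [← bernPr_comp m (upd2 p i j 0 1) (Equiv.swap i j)]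
    congr 1
    ext k
    unfold upd2
    by_cases hi : k = i
    · subst hi; simp [hij.symm]
    by_cases hj : k = j
    · subst hj; simp [hij.symm]
    simp [Equiv.swap_apply_of_ne_of_ne hi hj, hi, hj]
  rw [h1, h1] at hs
  have hb : b' = b := by linarith
  subst hb
  exact ⟨a, b', c, fun x y => by rw [h1]; ring⟩

lemma sum_upd2 {n : ℕ} (f : ℝ → ℝ) (p : Fin n → ℝ) (i j : Fin n) (hij : i ≠ j) (x y : ℝ) :
    ∑ k, f (upd2 p i j x y k) = ∑ k, f (p k) + (f x + f y - f (p i) - f (p j)) := by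
  have e : ∀ g : Fin n → ℝ, ∑ k, g k = g i + (g j + ∑ k ∈ (Finset.univ.erase i).erase j, g k) := by
    intro g
    rw [← Finset.add_sum_erase _ _ (Finset.mem_univ i),
      ← Finset.add_sum_erase (Finset.univ.erase i) _ (a := j) (by simp [hij.symm])]
  rw [e, e (fun k => f (p k))]
  have : ∑ k ∈ (Finset.univ.erase i).erase j, f (upd2 p i j x y k) =
      ∑ k ∈ (Finset.univ.erase i).erase j, f (p k) := by
    refine Finset.sum_congr rfl fun k hk => ?_
    simp only [Finset.mem_erase, Finset.mem_univ, and_true] at hk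
    simp [upd2, hk.1, hk.2]
  rw [this]
  simp [upd2, hij.symm]
  ring

/-- Fix `n`, `m` and `t ∈ [0, n]`.  Let
`F_m(p) = P(x_1 + ⋯ + x_n > m)` for independent Bernoulli variables `x_i` with
means `p_i`.  Then there is a minimizer `p*` of `F_m` over
`{p ∈ [0,1]^n : ∑ i, p i = t}` in which any two coordinates lying strictly in
`(0,1)` are equal. -/
theorem exists_minimizer_with_equal_interior_coords (n m : ℕ) (t : ℝ)
    (ht0 : 0 ≤ t) (htn : t ≤ (n : ℝ)) :
    ∃ p : Fin n → ℝ,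
      (∀ i, 0 ≤ p i ∧ p i ≤ 1) ∧ (∑ i, p i) = t ∧
      (∀ q : Fin n → ℝ, (∀ i, 0 ≤ q i ∧ q i ≤ 1) → (∑ i, q i) = t →
        bernPr p (fun ω => m < bCount ω) ≤ bernPr q (fun ω => m < bCount ω)) ∧
      (∀ i j, p i ∈ Set.Ioo (0 : ℝ) 1 → p j ∈ Set.Ioo (0 : ℝ) 1 → p i = p j) := by
  let F : (Fin n → ℝ) → ℝ := fun p => bernPr p (fun ω => m < bCount ω)
  have hF : Continuous F := bernPr_cont _
  let K : Set (Fin n → ℝ) := {p | (∀ i, 0 ≤ p i ∧ p i ≤ 1) ∧ ∑ i, p i = t}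
  have hK : IsCompact K := by
    have h1 : IsCompact (Set.pi Set.univ (fun _ : Fin n => Set.Icc (0:ℝ) 1)) :=
      isCompact_univ_pi fun _ => isCompact_Icc
    have h2 : IsClosed {p : Fin n → ℝ | ∑ i, p i = t} :=
      isClosed_eq (by fun_prop) continuous_const
    convert h1.inter_right h2 using 1
    ext p
    simp only [K, Set.mem_setOf_eq, Set.mem_inter_iff, Set.mem_pi, Set.mem_univ, true_imp_iff,
      Set.mem_Icc]
  have hne : K.Nonempty := by
    refine ⟨fun _ => t / n, fun _ => ⟨by positivity, div_le_one_of_le₀ htn (by positivity)⟩, ?_⟩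
    rcases Nat.eq_zero_or_pos n with h | h
    · subst h
      simp at htn ⊢
      linarith
    · have : (n:ℝ) ≠ 0 := by positivity
      simp
      field_simp
  obtain ⟨p0, hp0, hmin0⟩ := hK.exists_isMinOn hne hF.continuousOn
  have hK' : IsCompact (K ∩ {p | F p ≤ F p0}) :=
    hK.inter_right (isClosed_le hF continuous_const)
  obtain ⟨p, ⟨hp, hpF⟩, hminp⟩ := hK'.exists_isMinOn ⟨p0, hp0, le_refl (F p0)⟩
    (f := fun p => ∑ i, (p i) ^ 2) (by fun_prop)
  have hmin : ∀ q ∈ K, F p ≤ F q := fun q hq => le_trans hpF (hmin0 hq)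
  refine ⟨p, hp.1, hp.2, fun q h1 h2 => hmin q ⟨h1, h2⟩, ?_⟩
  intro i j hi hj
  by_contra hne'
  have hij : i ≠ j := fun h => hne' (by rw [h])
  obtain ⟨a, b, c, hf⟩ := bernPr_upd2 m p i j hij
  have hself : upd2 p i j (p i) (p j) = p := by
    ext k
    unfold upd2
    split_ifs with h1 h2
    · rw [h1]
    · rw [h2]
    · rfl
  have hFp : F p = a + b * (p i + p j) + c * (p i * p j) := by
    rw [← hf (p i) (p j), hself]
  have hmem : ∀ x y, 0 ≤ x → x ≤ 1 → 0 ≤ y → y ≤ 1 → x + y = p i + p j →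
      upd2 p i j x y ∈ K := by
    intro x y hx0 hx1 hy0 hy1 hs
    refine ⟨fun k => ?_, ?_⟩
    · unfold upd2
      split_ifs
      exacts [⟨hx0, hx1⟩, ⟨hy0, hy1⟩, hp.1 k]
    · have := sum_upd2 (fun x => x) p i j hij x y
      rw [this, hp.2]
      linarith
  have hle : ∀ x y, 0 ≤ x → x ≤ 1 → 0 ≤ y → y ≤ 1 → x + y = p i + p j →
      c * (p i * p j) ≤ c * (x * y) := by
    intro x y hx0 hx1 hy0 hy1 hs
    have h1 := hmin _ (hmem x y hx0 hx1 hy0 hy1 hs)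
    have h2 : F (upd2 p i j x y) = _ := hf x y
    rw [hFp, h2, hs] at h1
    linarith
  obtain ⟨hi0, hi1⟩ := hi
  obtain ⟨hj0, hj1⟩ := hj
  have hsq : 0 < (p i - p j) ^ 2 := by
    have : p i - p j ≠ 0 := sub_ne_zero.mpr hne'
    positivity
  have havg := hle ((p i + p j) / 2) ((p i + p j) / 2) (by linarith) (by linarith)
    (by linarith) (by linarith) (by ring)
  have hc0 : 0 ≤ c := by
    by_contra hneg
    push Not at hneg
    nlinarith [mul_pos (neg_pos.mpr hneg) hsq]
  have hc1 : c ≤ 0 := by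
    by_contra hpos
    push Not at hpos
    rcases lt_or_gt_of_ne hne' with h | h
    · obtain ⟨e, he0, he1⟩ := exists_between (lt_min hi0 (sub_pos.mpr hj1))
      rw [lt_min_iff] at he1
      have := hle (p i - e) (p j + e) (by linarith) (by linarith) (by linarith) (by linarith)
        (by ring)
      have h3 := le_of_mul_le_mul_left this hpos
      nlinarith [mul_pos he0 (sub_pos.mpr h)]
    · obtain ⟨e, he0, he1⟩ := exists_between (lt_min hj0 (sub_pos.mpr hi1))
      rw [lt_min_iff] at he1
      have := hle (p i + e) (p j - e) (by linarith) (by linarith) (by linarith) (by linarith)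
        (by ring)
      have h3 := le_of_mul_le_mul_left this hpos
      nlinarith [mul_pos he0 (sub_pos.mpr h)]
  have hc : c = 0 := le_antisymm hc1 hc0
  have hq := hmem ((p i + p j) / 2) ((p i + p j) / 2) (by linarith) (by linarith)
    (by linarith) (by linarith) (by ring)
  have hqF : F (upd2 p i j ((p i + p j) / 2) ((p i + p j) / 2)) ≤ F p0 := by
    have h2 : F (upd2 p i j ((p i + p j) / 2) ((p i + p j) / 2)) = _ := hf _ _
    refine le_trans (le_of_eq ?_) hpF
    rw [h2, hFp, hc]
    ring
  have hfin : ∑ k, (p k) ^ 2 ≤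
      ∑ k, (upd2 p i j ((p i + p j) / 2) ((p i + p j) / 2) k) ^ 2 := hminp ⟨hq, hqF⟩
  have hsum := sum_upd2 (fun x => x ^ 2) p i j hij ((p i + p j) / 2) ((p i + p j) / 2)
  rw [hsum] at hfin
  nlinarith
end

section
/- Let m ≥ 2 be an integer, let x_1, ..., x_n be independent Bernoulli random variables with means μ_1, ..., μ_n ∈ [0,1], and let y_1, ..., y_n be independent Bernoulli random variables with means ((m-1)/m)·μ_1, ..., ((m-1)/m)·μ_n. Then E[min(x_1 + ... + x_n, m)] / m ≥ E[min(y_1 + ... + y_n, m-1)] / (m-1). -/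
/-- expectation of `g(x_1 + ⋯ + x_n)` for independent Bernoulli variables `x_i`
with means `p` -/
noncomputable def bernExp {n : ℕ} (p : Fin n → ℝ) (g : ℕ → ℝ) : ℝ :=
  ∑ ω : Fin n → Bool, bernWeight p ω * g (bCount ω)

theorem bernExp_succ {n : ℕ} (p : Fin (n + 1) → ℝ) (g : ℕ → ℝ) :
    bernExp p g = p 0 * bernExp (fun i => p i.succ) (fun c => g (c + 1)) +
      (1 - p 0) * bernExp (fun i => p i.succ) g := by
  unfold bernExp
  rw [← (Fin.consEquiv (fun _ => Bool)).sum_comp, Fintype.sum_prod_type, Fintype.sum_bool,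
    Finset.mul_sum, Finset.mul_sum]
  congr 1 <;> refine Finset.sum_congr rfl fun ω _ => ?_
  · simp [bernWeight, bCount, Fin.prod_univ_succ, Fin.sum_univ_succ, Fin.consEquiv, add_comm,
      mul_assoc]
  · simp [bernWeight, bCount, Fin.prod_univ_succ, Fin.sum_univ_succ, Fin.consEquiv, mul_assoc]

/-- `binT q k g` is the expectation of `g` under the binomial law with parameters `k`, `q`. -/
noncomputable def binT (q : ℝ) : ℕ → (ℕ → ℝ) → ℝ
  | 0, g => g 0
  | k + 1, g => q * binT q k (fun c => g (c + 1)) + (1 - q) * binT q k g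

theorem binT_le (q : ℝ) (h0 : 0 ≤ q) (h1 : q ≤ 1) (a : ℝ) (k : ℕ) :
    ∀ (c : ℝ) (g : ℕ → ℝ), (∀ j : ℕ, g j ≤ a * j + c) → binT q k g ≤ a * q * k + c := by
  induction k with
  | zero => intro c g hg; simpa [binT] using hg 0
  | succ k ih =>
    intro c g hg
    have e1 := ih (c + a) (fun j => g (j + 1)) (fun j => by
      have := hg (j + 1); push_cast at this; linarith)
    have e2 := ih c g hg
    have e3 := mul_le_mul_of_nonneg_left e1 h0
    have e4 := mul_le_mul_of_nonneg_left e2 (sub_nonneg.2 h1)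
    simp only [binT]
    push_cast
    linarith

theorem bernExp_lin {n : ℕ} (p : Fin n → ℝ) (a b : ℝ) (f g : ℕ → ℝ) :
    bernExp p (fun c => a * f c + b * g c) = a * bernExp p f + b * bernExp p g := by
  unfold bernExp
  rw [Finset.mul_sum, Finset.mul_sum, ← Finset.sum_add_distrib]
  exact Finset.sum_congr rfl fun ω _ => by ring

theorem bernExp_thin (q : ℝ) {n : ℕ} (p : Fin n → ℝ) :
    ∀ g : ℕ → ℝ, bernExp (fun i => q * p i) g = bernExp p (fun k => binT q k g) := by
  induction n with
  | zero => intro g; simp [bernExp, bernWeight, bCount, binT]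
  | succ n ih =>
    intro g
    rw [bernExp_succ, bernExp_succ p, ih (fun i => p i.succ), ih (fun i => p i.succ)]
    simp only [binT]
    rw [bernExp_lin]
    ring

theorem bernExp_mono {n : ℕ} (p : Fin n → ℝ) (hp : ∀ i, 0 ≤ p i ∧ p i ≤ 1) (f g : ℕ → ℝ)
    (h : ∀ k, f k ≤ g k) : bernExp p f ≤ bernExp p g := by
  unfold bernExp
  refine Finset.sum_le_sum fun ω _ => mul_le_mul_of_nonneg_left (h _) ?_
  refine Finset.prod_nonneg fun i _ => ?_
  split_ifs
  · exact (hp i).1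
  · linarith [(hp i).2]

/-- For an integer `m ≥ 2`, independent Bernoulli variables
`x_1, …, x_n` with means `μ_i ∈ [0,1]` and independent Bernoulli variables
`y_1, …, y_n` with means `((m-1)/m)·μ_i`, we have
`E[min(∑ x_i, m)] / m ≥ E[min(∑ y_i, m-1)] / (m-1)`. -/
theorem bernoulli_min_expectation_monotone (n m : ℕ) (hm : 2 ≤ m)
    (μ : Fin n → ℝ) (hμ : ∀ i, 0 ≤ μ i ∧ μ i ≤ 1) :
    bernExp (fun i => (((m : ℝ) - 1) / m) * μ i) (fun c => ((min c (m - 1) : ℕ) : ℝ)) /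
        ((m : ℝ) - 1) ≤
      bernExp μ (fun c => ((min c m : ℕ) : ℝ)) / (m : ℝ) := by
  have hm2 : (2 : ℝ) ≤ m := by exact_mod_cast hm
  have hm0 : (0 : ℝ) < m := by linarith
  have hm1 : (0 : ℝ) < (m : ℝ) - 1 := by linarith
  have hq0 : 0 ≤ ((m : ℝ) - 1) / m := by positivity
  have hq1 : ((m : ℝ) - 1) / m ≤ 1 := by rw [div_le_one hm0]; linarith
  have key : ∀ k : ℕ, binT (((m : ℝ) - 1) / m) k (fun c => ((min c (m - 1) : ℕ) : ℝ)) ≤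
      (((m : ℝ) - 1) / m) * ((min k m : ℕ) : ℝ) + 0 * 0 := by
    intro k
    rcases le_total k m with h | h
    · have := binT_le _ hq0 hq1 1 k 0 (fun c => ((min c (m - 1) : ℕ) : ℝ)) (fun j => by
        have : ((min j (m - 1) : ℕ) : ℝ) ≤ j := by exact_mod_cast min_le_left _ _
        linarith)
      rw [min_eq_left h]
      linarith
    · have := binT_le _ hq0 hq1 0 k ((m : ℝ) - 1) (fun c => ((min c (m - 1) : ℕ) : ℝ)) (fun j => by
        have h2 : ((min j (m - 1) : ℕ) : ℝ) ≤ ((m - 1 : ℕ) : ℝ) := by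
          exact_mod_cast min_le_right _ _
        rw [Nat.cast_sub (by omega)] at h2
        push_cast at h2 ⊢
        linarith)
      rw [min_eq_right h, div_mul_cancel₀ _ hm0.ne']
      linarith
  have h := bernExp_mono μ hμ _ _ key
  rw [bernExp_lin μ _ 0 _ (fun _ => 0), ← bernExp_thin] at h
  rw [div_le_iff₀ hm1]
  refine h.trans (le_of_eq ?_)
  ring
end

section
/- Let X = x_1 + ... + x_n be a sum of independent Bernoulli random variables with E[X] = μ. Then 2·P(X = 0) + P(X = 1) ≤ (2 + μ)·e^{-μ}; that is, among sums of independent Bernoulli random variables with total mean μ, the quantity 2·P(X=0) + P(X=1) is at most its value for a Poisson(μ) random variable. -/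
theorem bCount_cons {n : ℕ} (b : Bool) (ω : Fin n → Bool) :
    bCount (Fin.cons b ω : Fin (n + 1) → Bool) = (if b then 1 else 0) + bCount ω := by
  unfold bCount
  rw [Fin.sum_univ_succ]
  simp only [Fin.cons_zero, Fin.cons_succ]

theorem bernWeight_cons {n : ℕ} (p : Fin (n + 1) → ℝ) (b : Bool) (ω : Fin n → Bool) :
    bernWeight p (Fin.cons b ω : Fin (n + 1) → Bool)
      = (if b then p 0 else 1 - p 0) * bernWeight (fun i => p i.succ) ω := by
  simp [bernWeight, Fin.prod_univ_succ]

theorem sum_cons {n : ℕ} (f : (Fin (n + 1) → Bool) → ℝ) :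
    ∑ ω, f ω = ∑ ω : Fin n → Bool, f (Fin.cons true ω) + ∑ ω : Fin n → Bool, f (Fin.cons false ω) := by
  rw [← (Fin.consEquiv (fun _ : Fin (n + 1) => Bool)).sum_comp, Fintype.sum_prod_type]
  simp [Fin.consEquiv]

theorem bernPr_zero_succ {n : ℕ} (p : Fin (n + 1) → ℝ) :
    bernPr p (fun ω => bCount ω = 0)
      = (1 - p 0) * bernPr (fun i => p i.succ) (fun ω => bCount ω = 0) := by
  simp only [bernPr, Finset.sum_filter]
  rw [sum_cons, Finset.mul_sum]
  simp [bCount_cons, bernWeight_cons]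

theorem bernPr_one_succ {n : ℕ} (p : Fin (n + 1) → ℝ) :
    bernPr p (fun ω => bCount ω = 1)
      = p 0 * bernPr (fun i => p i.succ) (fun ω => bCount ω = 0)
        + (1 - p 0) * bernPr (fun i => p i.succ) (fun ω => bCount ω = 1) := by
  simp only [bernPr, Finset.sum_filter]
  rw [sum_cons, Finset.mul_sum, Finset.mul_sum]
  simp [bCount_cons, bernWeight_cons]

theorem bernPr_nonneg {n : ℕ} (p : Fin n → ℝ) (hp : ∀ i, 0 ≤ p i ∧ p i ≤ 1)
    (E : (Fin n → Bool) → Prop) [DecidablePred E] : 0 ≤ bernPr p E := by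
  refine Finset.sum_nonneg fun ω _ => Finset.prod_nonneg fun i _ => ?_
  have := hp i
  split_ifs <;> linarith

theorem scalar_bound (p : ℝ) (h0 : 0 ≤ p) (h1 : p ≤ 1) :
    2 - p ≤ Real.exp (-p) * (2 + p) := by
  have h := Real.exp_bound' h0 h1 (n := 3) (by norm_num)
  simp [Finset.sum_range_succ, Nat.factorial] at h
  have h2 : (2 - p) * Real.exp p ≤ 2 + p := by
    refine (mul_le_mul_of_nonneg_left h (by linarith)).trans ?_
    have : 0 ≤ p ^ 3 := by positivity
    have : 0 ≤ p ^ 4 := by positivity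
    nlinarith
  have h3 : Real.exp (-p) * Real.exp p = 1 := by rw [← Real.exp_add]; simp
  calc 2 - p = Real.exp (-p) * ((2 - p) * Real.exp p) := by linear_combination (-(2 - p)) * h3
    _ ≤ _ := mul_le_mul_of_nonneg_left h2 (Real.exp_pos _).le

theorem general_bound (n : ℕ) : ∀ (p : Fin n → ℝ), (∀ i, 0 ≤ p i ∧ p i ≤ 1) → ∀ c : ℝ, 0 ≤ c →
    (2 + c) * bernPr p (fun ω => bCount ω = 0) + bernPr p (fun ω => bCount ω = 1) ≤
      (2 + c + ∑ i, p i) * Real.exp (-(∑ i, p i)) := by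
  induction n with
  | zero =>
    intro p _ c _
    simp [bernPr, bCount, bernWeight]
  | succ n ih =>
    intro p hp c hc
    have hq : ∀ i : Fin n, 0 ≤ p i.succ ∧ p i.succ ≤ 1 := fun i => hp i.succ
    obtain ⟨h0, h1⟩ := hp 0
    have key := ih (fun i => p i.succ) hq (c + p 0) (by linarith)
    rw [bernPr_zero_succ, bernPr_one_succ, Fin.sum_univ_succ, neg_add, Real.exp_add]
    have n0 := bernPr_nonneg _ hq (fun ω => bCount ω = 0)
    have n1 := bernPr_nonneg _ hq (fun ω => bCount ω = 1)
    have e1 : 1 - p 0 ≤ Real.exp (-p 0) := by linarith [Real.add_one_le_exp (-p 0)]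
    have e2 := scalar_bound (p 0) h0 h1
    generalize bernPr (fun i => p i.succ) (fun ω => bCount ω = 0) = A at *
    generalize bernPr (fun i => p i.succ) (fun ω => bCount ω = 1) = B at *
    have k := mul_le_mul_of_nonneg_left key (Real.exp_pos (-p 0)).le
    have a1 := mul_le_mul_of_nonneg_right e1 n1
    have a2 := mul_le_mul_of_nonneg_right e2 n0
    have a3 := mul_le_mul_of_nonneg_right e1 (mul_nonneg hc n0)
    linarith

/-- If `X` is a sum of independent Bernoulli random variables
with means `μ_i ∈ [0,1]` and total mean `μ = ∑ μ_i`, then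
`2·P(X = 0) + P(X = 1) ≤ (2 + μ)·e^{-μ}`, the corresponding Poisson(μ) value. -/
theorem bernoulli_sum_low_values_le_poisson (n : ℕ) (μ : Fin n → ℝ)
    (hμ : ∀ i, 0 ≤ μ i ∧ μ i ≤ 1) :
    2 * bernPr μ (fun ω => bCount ω = 0) + bernPr μ (fun ω => bCount ω = 1) ≤
      (2 + ∑ i, μ i) * Real.exp (-(∑ i, μ i)) := by
  simpa using general_bound n μ hμ 0 le_rfl
end

section
/- In the eager VCG auction, for every real τ > 0 and every reserve-price vector r, the number of winners whose payment is at least τ is at least min(|{b ∈ B : τ ≤ r_b and r_b ≤ β_b}|, k). -/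
/-!
The eager VCG auction with `k` identical items, buyers `ι`, bids `β` and
personalized reserve prices `r`.
-/

variable {ι : Type*} [Fintype ι] [DecidableEq ι]

/-- the set of buyers who clear their reserve price -/
noncomputable def clears (β r : ι → ℝ) : Finset ι :=
  Finset.univ.filter fun b => r b ≤ β b

/-- the winners: buyers who clear their reserve and have one of the `k` highest
cleared bids (fewer than `k` clearing buyers bid strictly higher) -/
noncomputable def winners (k : ℕ) (β r : ι → ℝ) : Finset ι :=
  (clears β r).filter fun b =>
    ((clears β r).filter fun b' => β b < β b').card < k

/-- the supporting bid: the `(k+1)`-th highest cleared bid, or `0` if fewer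
than `k+1` buyers clear their reserve -/
noncomputable def supportBid (k : ℕ) (β r : ι → ℝ) : ℝ :=
  if hT : ((clears β r).filter fun b =>
      k ≤ ((clears β r).filter fun b' => β b < β b').card).Nonempty then
    ((clears β r).filter fun b =>
      k ≤ ((clears β r).filter fun b' => β b < β b').card).sup' hT β
  else 0

/-- each winner pays the maximum of their reserve price and the supporting bid;
non-winners pay nothing -/
noncomputable def payment (k : ℕ) (β r : ι → ℝ) (b : ι) : ℝ :=
  if b ∈ winners k β r then max (r b) (supportBid k β r) else 0

/-- In the eager VCG auction, for every `τ > 0` and every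
reserve-price vector `r`, the number of winners whose payment is at least `τ`
is at least `min(|{b : τ ≤ r_b ≤ β_b}|, k)`. -/
theorem eager_vcg_winners_paying_tau (k : ℕ) (hk : 1 ≤ k)
    (hcard : k + 1 ≤ Fintype.card ι) (β : ι → ℝ)
    (hβinj : Function.Injective β) (hβ0 : ∀ b, 0 ≤ β b)
    (r : ι → ℝ) (hr0 : ∀ b, 0 ≤ r b) (τ : ℝ) (hτ : 0 < τ) :
    min (Finset.univ.filter fun b => τ ≤ r b ∧ r b ≤ β b).card k ≤
      ((winners k β r).filter fun b => τ ≤ payment k β r b).card := by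
  by_cases hA : (Finset.univ.filter fun b => τ ≤ r b ∧ r b ≤ β b) ⊆ winners k β r
  · refine (min_le_left _ _).trans (Finset.card_le_card ?_)
    intro b hb
    have hw := hA hb
    rw [Finset.mem_filter] at hb ⊢
    refine ⟨hw, ?_⟩
    unfold payment
    rw [if_pos hw]
    exact hb.2.1.trans (le_max_left _ _)
  · obtain ⟨b, hb, hbw⟩ := Finset.not_subset.mp hA
    have hb2 := (Finset.mem_filter.mp hb).2
    have hbS : b ∈ clears β r := by
      unfold clears
      exact Finset.mem_filter.mpr ⟨Finset.mem_univ _, hb2.2⟩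
    have hbT : b ∈ (clears β r).filter fun b =>
        k ≤ ((clears β r).filter fun b' => β b < β b').card := by
      refine Finset.mem_filter.mpr ⟨hbS, ?_⟩
      by_contra hlt
      exact hbw (Finset.mem_filter.mpr ⟨hbS, not_le.mp hlt⟩)
    have hs : τ ≤ supportBid k β r := by
      unfold supportBid
      rw [dif_pos ⟨b, hbT⟩]
      exact (hb2.1.trans hb2.2).trans (Finset.le_sup' β hbT)
    obtain ⟨m, hm, hmax⟩ := Finset.exists_max_image _ β ⟨b, hbT⟩
    refine (min_le_right _ _).trans ((Finset.mem_filter.mp hm).2.trans (Finset.card_le_card ?_))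
    intro c hc
    have hc2 := Finset.mem_filter.mp hc
    have hw : c ∈ winners k β r := by
      refine Finset.mem_filter.mpr ⟨hc2.1, ?_⟩
      by_contra hlt
      exact absurd hc2.2
        (not_lt.mpr (hmax c (Finset.mem_filter.mpr ⟨hc2.1, not_lt.mp hlt⟩)))
    refine Finset.mem_filter.mpr ⟨hw, ?_⟩
    unfold payment
    rw [if_pos hw]
    exact hs.trans (le_max_right _ _)
end

section
/- Consider the eager VCG auction with random reserve prices: let r = (r_b)_{b ∈ B} be a family of nonnegative real-valued random variables, and for τ > 0 let W(r, τ) denote the (random) number of winners whose payment is at least τ, let B_τ = {b ∈ B : β_b ≥ τ}, let Q_τ = |{b ∈ B_τ : r_b ≤ β_b}| and let P_τ = |{b ∈ B_τ : τ ≤ r_b ≤ β_b}|. Then E[W(r, τ)] ≥ max(k · P(Q_τ > k), E[min(P_τ, k)]). -/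
/-!
The eager VCG auction with `k` identical items, buyers `ι`, bids `β` and
personalized reserve prices `r`.
-/

variable {ι : Type*} [Fintype ι] [DecidableEq ι]

open MeasureTheory

theorem losers_card_aux (k : ℕ) (β r : ι → ℝ) (a : ι)
    (ha : a ∈ (clears β r).filter fun b =>
      k ≤ ((clears β r).filter fun b' => β b < β b').card) :
    k ≤ (winners k β r).card := by
  obtain ⟨b, hb, hmax⟩ := Finset.exists_max_image _ β ⟨a, ha⟩
  refine (Finset.mem_filter.1 hb).2.trans (Finset.card_le_card ?_)
  intro c hc
  rw [Finset.mem_filter] at hc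
  rw [winners, Finset.mem_filter]
  refine ⟨hc.1, ?_⟩
  by_contra hcon
  have := hmax c (Finset.mem_filter.2 ⟨hc.1, not_lt.1 hcon⟩)
  linarith [hc.2]

theorem le_supportBid_aux (k : ℕ) (β r : ι → ℝ) (a : ι)
    (ha : a ∈ (clears β r).filter fun b =>
      k ≤ ((clears β r).filter fun b' => β b < β b').card) :
    β a ≤ supportBid k β r := by
  rw [supportBid, dif_pos ⟨a, ha⟩]
  exact Finset.le_sup' β ha

/-- If some losing clearing buyer bids at least `τ`, at least `k` winners pay at least `τ`. -/
theorem card_paying_of_loser (k : ℕ) (β r : ι → ℝ) (τ : ℝ) (a : ι)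
    (ha : a ∈ (clears β r).filter fun b =>
      k ≤ ((clears β r).filter fun b' => β b < β b').card) (hτ : τ ≤ β a) :
    k ≤ ((winners k β r).filter fun b => τ ≤ payment k β r b).card := by
  rw [Finset.filter_true_of_mem]
  · exact losers_card_aux k β r a ha
  · intro b hb
    rw [payment, if_pos hb]
    exact (hτ.trans (le_supportBid_aux k β r a ha)).trans (le_max_right _ _)

theorem card_paying_of_Q (k : ℕ) (β r : ι → ℝ) (hβinj : Function.Injective β) (τ : ℝ)
    (hQ : k < (Finset.univ.filter fun b => τ ≤ β b ∧ r b ≤ β b).card) :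
    k ≤ ((winners k β r).filter fun b => τ ≤ payment k β r b).card := by
  obtain ⟨a, ha, hmin⟩ := Finset.exists_min_image _ β
    (Finset.card_pos.1 (Nat.zero_lt_of_lt hQ))
  have ha2 := (Finset.mem_filter.1 ha).2
  refine card_paying_of_loser k β r τ a ?_ ha2.1
  refine Finset.mem_filter.2 ⟨by simp [clears, ha2.2], ?_⟩
  have h1 := Finset.card_erase_of_mem ha
  refine le_trans (by omega : k ≤ _) (Finset.card_le_card (s :=
    (Finset.univ.filter fun b => τ ≤ β b ∧ r b ≤ β b).erase a) ?_)
  intro c hc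
  obtain ⟨hne, hc⟩ := Finset.mem_erase.1 hc
  refine Finset.mem_filter.2 ⟨by simp [clears, (Finset.mem_filter.1 hc).2.2], ?_⟩
  exact lt_of_le_of_ne (hmin c hc) fun h => hne (hβinj h).symm

theorem card_paying_of_P (k : ℕ) (β r : ι → ℝ) (τ : ℝ) :
    min (Finset.univ.filter fun b => τ ≤ β b ∧ τ ≤ r b ∧ r b ≤ β b).card k ≤
      ((winners k β r).filter fun b => τ ≤ payment k β r b).card := by
  by_cases h : ∃ a ∈ (clears β r).filter fun b =>
      k ≤ ((clears β r).filter fun b' => β b < β b').card, τ ≤ β a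
  · obtain ⟨a, ha, hτ⟩ := h
    exact (min_le_right _ _).trans (card_paying_of_loser k β r τ a ha hτ)
  · refine (min_le_left _ _).trans (Finset.card_le_card ?_)
    intro b hb
    obtain ⟨h1, h2, h3⟩ := (Finset.mem_filter.1 hb).2
    have hc : b ∈ clears β r := by simp [clears, h3]
    have hw : b ∈ winners k β r := by
      rw [winners, Finset.mem_filter]
      refine ⟨hc, ?_⟩
      by_contra hcon
      exact h ⟨b, Finset.mem_filter.2 ⟨hc, not_lt.1 hcon⟩, h1⟩
    refine Finset.mem_filter.2 ⟨hw, ?_⟩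
    rw [payment, if_pos hw]
    exact h2.trans (le_max_left _ _)

/-- A function of `ω` depending only on the truth values of finitely many measurable
predicates is measurable. -/
theorem measurable_of_signature {Ω : Type*} [MeasurableSpace Ω]
    (p q : ι → Ω → Prop) (hp : ∀ b, Measurable (p b)) (hq : ∀ b, Measurable (q b))
    (f : Ω → ℝ) (hf : ∀ ω ω', (∀ b, p b ω ↔ p b ω') → (∀ b, q b ω ↔ q b ω') → f ω = f ω') :
    Measurable f := by
  have hs : Measurable (fun ω => ((fun b => (p b ω, q b ω)) : ι → Prop × Prop)) :=
    measurable_pi_lambda _ fun b => (hp b).prodMk (hq b)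
  have hfac : Function.FactorsThrough f
      (fun ω => ((fun b => (p b ω, q b ω)) : ι → Prop × Prop)) := by
    intro ω ω' h
    refine hf ω ω' (fun b => ?_) (fun b => ?_)
    · exact iff_of_eq (congrArg Prod.fst (congrFun h b))
    · exact iff_of_eq (congrArg Prod.snd (congrFun h b))
  obtain ⟨g, hg⟩ := (Function.factorsThrough_iff f).1 hfac
  rw [hg]
  exact (measurable_of_finite g).comp hs

/-- Eager VCG with random reserve prices `r b : Ω → ℝ`
(nonnegative, measurable, arbitrarily correlated): for `τ > 0`, with
`W(r, τ)` the number of winners paying at least `τ`,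
`Q_τ = |{b : β b ≥ τ, r_b ≤ β_b}|` and `P_τ = |{b : β b ≥ τ, τ ≤ r_b ≤ β_b}|`,
we have `E[W(r, τ)] ≥ max(k · P(Q_τ > k), E[min(P_τ, k)])`. -/
theorem eager_vcg_random_reserves_expected_winners (k : ℕ) (hk : 1 ≤ k)
    (hcard : k + 1 ≤ Fintype.card ι) (β : ι → ℝ)
    (hβinj : Function.Injective β) (hβ0 : ∀ b, 0 ≤ β b)
    {Ω : Type*} [MeasurableSpace Ω] (μ : Measure Ω) [IsProbabilityMeasure μ]
    (r : ι → Ω → ℝ) (hr0 : ∀ b ω, 0 ≤ r b ω) (hrmeas : ∀ b, Measurable (r b))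
    (τ : ℝ) (hτ : 0 < τ) :
    max ((k : ℝ) *
          (μ {ω | k < (Finset.univ.filter fun b => τ ≤ β b ∧ r b ω ≤ β b).card}).toReal)
        (∫ ω, ((min (Finset.univ.filter fun b =>
            τ ≤ β b ∧ τ ≤ r b ω ∧ r b ω ≤ β b).card k : ℕ) : ℝ) ∂μ) ≤
      ∫ ω, (((winners k β fun b => r b ω).filter fun b =>
          τ ≤ payment k β (fun b => r b ω) b).card : ℝ) ∂μ := by
  have hle : ∀ b, Measurable fun ω => r b ω ≤ β b := fun b =>
    measurableSet_setOfPred.1 (measurableSet_le (hrmeas b) measurable_const)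
  have hge : ∀ b, Measurable fun ω => τ ≤ r b ω := fun b =>
    measurableSet_setOfPred.1 (measurableSet_le measurable_const (hrmeas b))
  have hIntegr : ∀ (f : Ω → ℕ), Measurable (fun ω => (f ω : ℝ)) →
      (∀ ω, f ω ≤ Fintype.card ι) → Integrable (fun ω => (f ω : ℝ)) μ := by
    intro f hf hb
    refine Integrable.of_bound hf.aestronglyMeasurable (Fintype.card ι : ℝ)
      (Filter.Eventually.of_forall fun ω => ?_)
    rw [Real.norm_natCast]
    exact_mod_cast hb ω
  have hW : Integrable (fun ω => (((winners k β fun b => r b ω).filter fun b =>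
          τ ≤ payment k β (fun b => r b ω) b).card : ℝ)) μ := by
    refine hIntegr _ ?_ fun ω => Finset.card_le_univ _
    refine measurable_of_signature (fun b ω => r b ω ≤ β b) (fun b ω => τ ≤ r b ω)
      hle hge _ ?_
    intro ω ω' h1 h2
    have hc : clears β (fun b => r b ω) = clears β (fun b => r b ω') := by
      ext b
      simp only [clears, Finset.mem_filter, Finset.mem_univ, true_and]
      exact h1 b
    have hw : winners k β (fun b => r b ω) = winners k β (fun b => r b ω') := by
      simp only [winners, hc]
    have hs : supportBid k β (fun b => r b ω) = supportBid k β (fun b => r b ω') := by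
      simp only [supportBid, hc]
    have hfin : ((winners k β fun b => r b ω).filter fun b =>
          τ ≤ payment k β (fun b => r b ω) b) = ((winners k β fun b => r b ω').filter fun b =>
          τ ≤ payment k β (fun b => r b ω') b) := by
      rw [hw]
      refine Finset.filter_congr fun b hb => ?_
      rw [payment, payment, hw, if_pos hb, if_pos hb, hs, le_max_iff, le_max_iff]
      exact or_congr_left (h2 b)
    rw [hfin]
  have hPint : Integrable (fun ω => ((min (Finset.univ.filter fun b =>
            τ ≤ β b ∧ τ ≤ r b ω ∧ r b ω ≤ β b).card k : ℕ) : ℝ)) μ := by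
    refine hIntegr _ ?_ fun ω => (min_le_left _ _).trans (Finset.card_le_univ _)
    refine measurable_of_signature (fun b ω => r b ω ≤ β b) (fun b ω => τ ≤ r b ω)
      hle hge _ ?_
    intro ω ω' h1 h2
    simp only [h1, h2]
  have hQmeas : MeasurableSet
      {ω | k < (Finset.univ.filter fun b => τ ≤ β b ∧ r b ω ≤ β b).card} := by
    have hm : Measurable fun ω =>
        ((Finset.univ.filter fun b => τ ≤ β b ∧ r b ω ≤ β b).card : ℝ) := by
      refine measurable_of_signature (fun b ω => r b ω ≤ β b) (fun b ω => τ ≤ r b ω)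
        hle hge _ ?_
      intro ω ω' h1 h2
      simp only [h1]
    have := measurableSet_lt (measurable_const (a := (k : ℝ))) hm
    simpa only [Nat.cast_lt] using this
  refine max_le ?_ ?_
  · have h1 : (k : ℝ) *
          (μ {ω | k < (Finset.univ.filter fun b => τ ≤ β b ∧ r b ω ≤ β b).card}).toReal =
        ∫ ω, Set.indicator
          {ω | k < (Finset.univ.filter fun b => τ ≤ β b ∧ r b ω ≤ β b).card}
          (fun _ => (k : ℝ)) ω ∂μ := by
      rw [integral_indicator_const _ hQmeas, smul_eq_mul, mul_comm]
      rfl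
    rw [h1]
    refine integral_mono ((integrable_const _).indicator hQmeas) hW fun ω => ?_
    refine Set.indicator_apply_le' (fun h => ?_) (fun _ => Nat.cast_nonneg _)
    exact Nat.cast_le.2 (card_paying_of_Q k β (fun b => r b ω) hβinj τ h)
  · refine integral_mono hPint hW fun ω => ?_
    exact Nat.cast_le.2 (card_paying_of_P k β (fun b => r b ω) τ)
end
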